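/- arXiv:math/0612435 — 10 statements merged into one kernel-verified Lean document; each statement's English description precedes it below -/
import Mathlib

section
/- If an m×n matrix X is in D̃(m,n), then the (m+1)×n matrix X' obtained by adjoining to X a new row which is a linear combination of the rows of X (i.e., the new row is ∑_i λ_i · (row i of X) for some coefficients λ_i ∈ R) belongs to D̃(m+1, n). -/
/-! For fixed columns `j`, `j'`, the expression `u j * v j' + v j * u j'` is a symmetric bilinear
form in the rows `u`, `v`. The defining condition says that it vanishes on all pairs of rows, so it
vanishes on all pairs of vectors in their span, to which every row of the enlarged matrix belongs. -/

/-- `D̃(m,n)`: matrices with `X_{ij}X_{i'j'} + X_{i'j}X_{ij'} = 0` for all indices. -/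
def Dtilde {R : Type*} [CommRing R] {m n : ℕ} (X : Matrix (Fin m) (Fin n) R) : Prop :=
  ∀ (i i' : Fin m) (j j' : Fin n), X i j * X i' j' + X i' j * X i j' = 0

theorem pairing_sum_eq_zero {R : Type*} [CommRing R] {m n : ℕ} (X : Matrix (Fin m) (Fin n) R)
    (lam : Fin m → R) (v : Fin n → R) (j j' : Fin n)
    (h : ∀ i, X i j * v j' + v j * X i j' = 0) :
    (∑ i, lam i • X i) j * v j' + v j * (∑ i, lam i • X i) j' = 0 := by
  simp only [Finset.sum_apply, Pi.smul_apply, smul_eq_mul, Finset.sum_mul, Finset.mul_sum,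
    ← Finset.sum_add_distrib]
  refine Finset.sum_eq_zero fun i _ => ?_
  linear_combination lam i * h i

theorem stmt_3 {R : Type*} [CommRing R]
    (h2 : ∀ r : R, r + r = 0 → r = 0)
    {m n : ℕ} (X : Matrix (Fin m) (Fin n) R) (hX : Dtilde X)
    (lam : Fin m → R) :
    Dtilde (Matrix.of (Fin.snoc (fun i => X i) (∑ i, lam i • X i)) :
      Matrix (Fin (m + 1)) (Fin n) R) := by
  have old_new : ∀ (i : Fin m) (j j' : Fin n),
      (∑ k, lam k • X k) j * X i j' + X i j * (∑ k, lam k • X k) j' = 0 :=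
    fun i j j' => pairing_sum_eq_zero X lam (X i) j j' fun k => hX k i j j'
  intro i i' j j'
  induction i using Fin.lastCases with
  | last =>
    induction i' using Fin.lastCases with
    | last =>
      simp only [Matrix.of_apply, Fin.snoc_last]
      exact pairing_sum_eq_zero X lam _ j j' fun k => by linear_combination old_new k j j'
    | cast i' =>
      simp only [Matrix.of_apply, Fin.snoc_last, Fin.snoc_castSucc]
      exact old_new i' j j'
  | cast i =>
    induction i' using Fin.lastCases with
    | last =>
      simp only [Matrix.of_apply, Fin.snoc_last, Fin.snoc_castSucc]
      linear_combination old_new i j j'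
    | cast i' =>
      simp only [Matrix.of_apply, Fin.snoc_castSucc]
      exact hX i i' j j'
end

section
/- If X is an m×n matrix in D̃(m,n), then any linear combination of the rows of X (i.e., any vector of the form ∑_i λ_i · (row i of X) with λ_i ∈ R) belongs to D(n); similarly any linear combination of the columns of X belongs to D(m). -/
/-!
Twice the product of two coordinates of a combination of rows is a sum of the defining
relations of `D̃(m,n)` weighted by `λ_i λ_i'`, hence zero, and 2 is cancellable
(`Dtilde.dn_row_combination`). The defining relations are invariant under transposition
(`Dtilde.transpose`), so the claim on columns is the claim on rows of the transpose.
-/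

/-- `D(n)`: vectors all of whose pairwise coordinate products vanish. -/
def Dn {R : Type*} [CommRing R] {n : ℕ} (x : Fin n → R) : Prop :=
  ∀ j j' : Fin n, x j * x j' = 0

/-- The product of two coordinates expands to `∑ i, ∑ i', λ_i λ_i' X_ij X_i'j'`; it is added
to the same sum with `i` and `i'` exchanged. -/
theorem Dtilde.dn_row_combination {R : Type*} [CommRing R]
    (h2 : ∀ r : R, r + r = 0 → r = 0)
    {m n : ℕ} {X : Matrix (Fin m) (Fin n) R} (hX : Dtilde X) (lam : Fin m → R) :
    Dn (fun j => ∑ i, lam i * X i j) := by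
  intro j j'
  apply h2
  simp only [Finset.sum_mul_sum]
  nth_rewrite 2 [Finset.sum_comm]
  simp only [← Finset.sum_add_distrib]
  refine Finset.sum_eq_zero fun i _ => Finset.sum_eq_zero fun i' _ => ?_
  linear_combination lam i * lam i' * hX i i' j j'

theorem Dtilde.transpose {R : Type*} [CommRing R] {m n : ℕ}
    {X : Matrix (Fin m) (Fin n) R} (hX : Dtilde X) : Dtilde X.transpose := by
  intro j j' i i'
  simp only [Matrix.transpose_apply]
  linear_combination hX i i' j j'

theorem stmt_4 {R : Type*} [CommRing R]
    (h2 : ∀ r : R, r + r = 0 → r = 0)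
    {m n : ℕ} (X : Matrix (Fin m) (Fin n) R) (hX : Dtilde X) :
    (∀ lam : Fin m → R, Dn (fun j => ∑ i, lam i * X i j)) ∧
    (∀ mu : Fin n → R, Dn (fun i => ∑ j, mu j * X i j)) := by
  exact ⟨fun lam => hX.dn_row_combination h2 lam,
    fun mu => hX.transpose.dn_row_combination h2 mu⟩
end

section
/- For an m×n matrix X over R (with m,n ≥ 2), the following are equivalent: (1) X belongs to D̃(m,n); (2) every row of X belongs to D(n), and the difference of any two rows of X belongs to D(n). -/
theorem stmt_5 {R : Type*} [CommRing R]
    (h2 : ∀ r : R, r + r = 0 → r = 0)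
    {m n : ℕ} (hm : 2 ≤ m) (hn : 2 ≤ n)
    (X : Matrix (Fin m) (Fin n) R) :
    Dtilde X ↔
      ((∀ i : Fin m, Dn (fun j => X i j)) ∧
       (∀ i i' : Fin m, Dn (fun j => X i j - X i' j))) := by
  -- For rows `x`, `y`: `(x - y)_j (x - y)_j' = x_j x_j' + y_j y_j' - (x_j y_j' + y_j x_j')`.
  constructor
  · intro h
    -- The case `i = i'` of the defining equations is `2 x_j x_j' = 0`.
    have hrow : ∀ i j j', X i j * X i j' = 0 := fun i j j' => h2 _ (h i i j j')
    refine ⟨hrow, fun i i' j j' => ?_⟩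
    linear_combination hrow i j j' + hrow i' j j' - h i i' j j'
  · rintro ⟨hrow, hdiff⟩ i i' j j'
    have h₁ : X i j * X i j' = 0 := hrow i j j'
    have h₂ : X i' j * X i' j' = 0 := hrow i' j j'
    have h₃ : (X i j - X i' j) * (X i j' - X i' j') = 0 := hdiff i i' j j'
    linear_combination h₁ + h₂ - h₃
end

section
/- Let x ∈ R^n. Then x ∈ D(n) if and only if for every R-linear map α : R^n → R, the element α(x) belongs to D (i.e., α(x)² = 0). -/
theorem stmt_7 {R : Type*} [CommRing R]
    (h2 : ∀ r : R, r + r = 0 → r = 0)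
    {n : ℕ} (x : Fin n → R) :
    Dn x ↔ ∀ α : (Fin n → R) →ₗ[R] R, α x * α x = 0 := by
  constructor
  · intro hx α
    -- Expanding `α x * α x` bilinearly in the coordinates leaves only multiples of `x i * x j`.
    rw [LinearMap.pi_apply_eq_sum_univ α x, Finset.sum_mul_sum]
    refine Finset.sum_eq_zero fun i _ => Finset.sum_eq_zero fun j _ => ?_
    rw [smul_eq_mul, smul_eq_mul, mul_mul_mul_comm, hx i j, zero_mul]
  · intro h i j
    -- Polarization: the squares of the functionals `x i`, `x j` and `x i + x j` all vanish.
    have hi : x i * x i = 0 := h (LinearMap.proj i)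
    have hj : x j * x j = 0 := h (LinearMap.proj j)
    have hij := h ((LinearMap.proj i : (Fin n → R) →ₗ[R] R) + (LinearMap.proj j : (Fin n → R) →ₗ[R] R))
    rw [LinearMap.add_apply] at hij
    change (x i + x j) * (x i + x j) = 0 at hij
    exact h2 _ (by linear_combination hij - hi - hj)
end

section
/- Let X be an m×n matrix in D̃(m,n). Then for any p×m matrix P, the matrix product P·X belongs to D̃(p,n); and for any n×q matrix Q, the matrix product X·Q belongs to D̃(m,q). -/
theorem stmt_9 {R : Type*} [CommRing R]
    (h2 : ∀ r : R, r + r = 0 → r = 0)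
    {m n : ℕ} (X : Matrix (Fin m) (Fin n) R) (hX : Dtilde X) :
    (∀ (p : ℕ) (P : Matrix (Fin p) (Fin m) R), Dtilde (P * X)) ∧
    (∀ (q : ℕ) (Q : Matrix (Fin n) (Fin q) R), Dtilde (X * Q)) := by
  -- Each relation for the product is a linear combination of the relations for `X`.
  constructor
  · intro p P a a' j j'
    -- Commuting the second product makes both double sums carry the weight `P a k * P a' k'`.
    rw [mul_comm ((P * X) a' j)]
    simp only [Matrix.mul_apply, Finset.sum_mul_sum, ← Finset.sum_add_distrib]
    refine Finset.sum_eq_zero fun k _ => Finset.sum_eq_zero fun k' _ => ?_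
    linear_combination P a k * P a' k' * hX k k' j j'
  · intro q Q i i' b b'
    simp only [Matrix.mul_apply, Finset.sum_mul_sum, ← Finset.sum_add_distrib]
    refine Finset.sum_eq_zero fun k _ => Finset.sum_eq_zero fun k' _ => ?_
    linear_combination Q k b * Q k' b' * hX i i' k k'
end

section
/- Let V be an R-module which is linearly isomorphic to R^m for some m. Then D_s(V) = D_w(V). Moreover, for V = R^m, this common set equals D(m). -/
/-- `D_s(V)`: images of elements of some `D(n)` under linear maps `Rⁿ → V`. -/
def Ds (R : Type*) [CommRing R] (V : Type*) [AddCommGroup V] [Module R V] : Set V :=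
  {v | ∃ (n : ℕ) (f : (Fin n → R) →ₗ[R] V) (x : Fin n → R), Dn x ∧ f x = v}

/-- `D_w(V)`: elements sent into `D` by every linear functional. -/
def Dw (R : Type*) [CommRing R] (V : Type*) [AddCommGroup V] [Module R V] : Set V :=
  {v | ∀ φ : V →ₗ[R] R, φ v * φ v = 0}

theorem Dn.map_mul_map {R : Type*} [CommRing R] {n : ℕ} {x : Fin n → R} (hx : Dn x)
    (φ ψ : (Fin n → R) →ₗ[R] R) : φ x * ψ x = 0 := by
  rw [LinearMap.pi_apply_eq_sum_univ φ x, LinearMap.pi_apply_eq_sum_univ ψ x,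
    Finset.sum_mul_sum]
  refine Finset.sum_eq_zero fun i _ => Finset.sum_eq_zero fun j _ => ?_
  rw [smul_mul_smul_comm, hx i j, zero_smul]

theorem Ds_subset_Dw (R : Type*) [CommRing R] (V : Type*) [AddCommGroup V] [Module R V] :
    Ds R V ⊆ Dw R V := by
  rintro _ ⟨n, f, x, hx, rfl⟩ φ
  exact hx.map_mul_map (φ ∘ₗ f) (φ ∘ₗ f)

theorem Dn_of_mem_Dw {R : Type*} [CommRing R] (h2 : ∀ r : R, r + r = 0 → r = 0) {m : ℕ}
    {x : Fin m → R} (hx : x ∈ Dw R (Fin m → R)) : Dn x := by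
  intro j j'
  have hj : x j * x j = 0 := hx (LinearMap.proj j)
  have hj' : x j' * x j' = 0 := hx (LinearMap.proj j')
  have hs : (x j + x j') * (x j + x j') = 0 :=
    hx ((LinearMap.proj j : (Fin m → R) →ₗ[R] R) + (LinearMap.proj j' : (Fin m → R) →ₗ[R] R))
  apply h2
  linear_combination hs - hj - hj'

theorem mem_Ds_of_Dn {R : Type*} [CommRing R] {V : Type*} [AddCommGroup V] [Module R V] {m : ℕ}
    (e : V ≃ₗ[R] (Fin m → R)) {v : V} (hv : Dn (e v)) : v ∈ Ds R V :=
  ⟨m, e.symm.toLinearMap, e v, hv, e.symm_apply_apply v⟩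

theorem stmt_11 {R : Type*} [CommRing R]
    (h2 : ∀ r : R, r + r = 0 → r = 0) :
    (∀ (V : Type*) [AddCommGroup V] [Module R V] (m : ℕ),
      (V ≃ₗ[R] (Fin m → R)) → Ds R V = Dw R V) ∧
    (∀ m : ℕ, Ds R (Fin m → R) = {x | Dn x} ∧ Dw R (Fin m → R) = {x | Dn x}) := by
  refine ⟨fun V _ _ m e => (Ds_subset_Dw R V).antisymm fun v hv =>
    mem_Ds_of_Dn e (Dn_of_mem_Dw h2 fun φ => hv (φ ∘ₗ e.toLinearMap)), fun m => ?_⟩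
  have hDs : {x : Fin m → R | Dn x} ⊆ Ds R (Fin m → R) :=
    fun x hx => mem_Ds_of_Dn (LinearEquiv.refl R _) hx
  have hDw : Dw R (Fin m → R) ⊆ {x | Dn x} := fun x hx => Dn_of_mem_Dw h2 hx
  have hsw := Ds_subset_Dw R (Fin m → R)
  exact ⟨(hsw.trans hDw).antisymm hDs, hDw.antisymm (hDs.trans hsw)⟩
end

section
/- For an m×n matrix X over R (with m,n ≥ 2), the following are equivalent: (1) for every vector v ∈ R^n, the matrix-vector product X·v belongs to D(m); (2) for every v ∈ R^n and every R-linear map y : R^m → R, y(X·v) ∈ D; (3) X belongs to D̃(m,n). -/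
theorem stmt_13 {R : Type*} [CommRing R]
    (h2 : ∀ r : R, r + r = 0 → r = 0)
    {m n : ℕ} (hm : 2 ≤ m) (hn : 2 ≤ n)
    (X : Matrix (Fin m) (Fin n) R) :
    [ ∀ v : Fin n → R, Dn (X.mulVec v),
      ∀ (v : Fin n → R) (y : (Fin m → R) →ₗ[R] R),
        y (X.mulVec v) * y (X.mulVec v) = 0,
      Dtilde X ].TFAE := by
  tfae_have 1 → 2 := by
    intro h v y
    rw [LinearMap.pi_apply_eq_sum_univ y (X.mulVec v), Finset.sum_mul_sum]
    refine Finset.sum_eq_zero fun i _ => Finset.sum_eq_zero fun i' _ => ?_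
    rw [smul_eq_mul, smul_eq_mul, mul_mul_mul_comm, h v i i', zero_mul]
  tfae_have 2 → 1 := by
    intro h v i i'
    let p (k : Fin m) : (Fin m → R) →ₗ[R] R := LinearMap.proj k
    have hi := h v (p i)
    have hi' := h v (p i')
    have hs := h v (p i + p i')
    simp only [p, LinearMap.add_apply, LinearMap.proj_apply] at hi hi' hs
    exact h2 _ (by linear_combination hs - hi - hi')
  tfae_have 1 → 3 := by
    intro h i i' j j'
    have hj := h (Pi.single j 1) i i'
    have hj' := h (Pi.single j' 1) i i'
    have hs := h (Pi.single j 1 + Pi.single j' 1) i i'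
    simp only [Matrix.mulVec_add, Matrix.mulVec_single_one, Pi.add_apply, Matrix.col_apply]
      at hj hj' hs
    linear_combination hs - hj - hj'
  tfae_have 3 → 1 := by
    intro h v i i'
    have key : X.mulVec v i * X.mulVec v i' =
        ∑ j, ∑ j', (X i j * v j) * (X i' j' * v j') := by
      simp only [Matrix.mulVec, dotProduct, Finset.sum_mul_sum]
    have key' := key.trans Finset.sum_comm
    apply h2
    -- Add the double sum to its transpose, so that the terms pair up as in `Dtilde`.
    nth_rewrite 1 [key]
    rw [key', ← Finset.sum_add_distrib]
    refine Finset.sum_eq_zero fun j _ => ?_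
    rw [← Finset.sum_add_distrib]
    refine Finset.sum_eq_zero fun j' _ => ?_
    linear_combination (v j * v j') * h i i' j j'
  tfae_finish
end

section
/- Let X be a special n×n matrix over R, let σ be a permutation of {1,…,n}, and let X^σ be the matrix obtained by permuting the columns of X according to σ (i.e., (X^σ)_{ij} = X_{i σ(j)}). Then the multiplicative trace satisfies tr_m(X^σ) = sign(σ) · tr_m(X), where sign(σ) is the sign of σ (as ±1 in R). -/
/-! Multiplying `σ` by a transposition `(x y)` changes only the two factors of `∏ i, X i (σ i)` in
rows `x` and `y`, and specialness for these rows and the columns `σ x`, `σ y` says exactly that the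
product of the two factors changes sign (`prod_mul_swap_of_special`). The theorem follows by writing
`σ` as a product of transpositions. -/

/-- A square matrix is *special* if `X_{ij}X_{i'j'} + X_{i'j}X_{ij'} = 0`
whenever `i ≠ i'` and `j ≠ j'`. -/
def Special {R : Type*} [CommRing R] {n : ℕ} (X : Matrix (Fin n) (Fin n) R) : Prop :=
  ∀ (i i' j j' : Fin n), i ≠ i' → j ≠ j' → X i j * X i' j' + X i' j * X i j' = 0

/-- The *multiplicative trace*: the product of the diagonal entries. -/
def trM {R : Type*} [CommRing R] {n : ℕ} (X : Matrix (Fin n) (Fin n) R) : R :=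
  ∏ i, X i i

lemma prod_mul_swap_of_special {R : Type*} [CommRing R] {n : ℕ} {X : Matrix (Fin n) (Fin n) R}
    (hX : Special X) (σ : Equiv.Perm (Fin n)) {x y : Fin n} (hxy : x ≠ y) :
    ∏ i, X i ((σ * Equiv.swap x y) i) = -∏ i, X i (σ i) := by
  have split : ∀ f : Fin n → R,
      ∏ i, f i = f x * (f y * ∏ i ∈ (Finset.univ.erase x).erase y, f i) := fun f => by
    rw [Finset.mul_prod_erase _ _ (by simp [hxy.symm]), Finset.mul_prod_erase _ _ (by simp)]
  have rest : ∏ i ∈ (Finset.univ.erase x).erase y, X i ((σ * Equiv.swap x y) i)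
      = ∏ i ∈ (Finset.univ.erase x).erase y, X i (σ i) := by
    refine Finset.prod_congr rfl fun i hi => ?_
    simp only [Finset.mem_erase, Finset.mem_univ, and_true] at hi
    rw [Equiv.Perm.mul_apply, Equiv.swap_apply_of_ne_of_ne hi.2 hi.1]
  rw [split, split fun i => X i (σ i), rest]
  simp only [Equiv.Perm.mul_apply, Equiv.swap_apply_left, Equiv.swap_apply_right]
  linear_combination (∏ i ∈ (Finset.univ.erase x).erase y, X i (σ i)) *
    hX x y (σ x) (σ y) hxy (σ.injective.ne hxy)

theorem stmt_15 {R : Type*} [CommRing R]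
    (h2 : ∀ r : R, r + r = 0 → r = 0)
    {n : ℕ} (X : Matrix (Fin n) (Fin n) R) (hX : Special X)
    (σ : Equiv.Perm (Fin n)) :
    trM (Matrix.of fun i j => X i (σ j)) = (Equiv.Perm.sign σ : ℤ) • trM X := by
  simp only [trM, Matrix.of_apply]
  induction σ using Equiv.Perm.swap_induction_on' with
  | one => simp
  | mul_swap σ x y hxy ih =>
    rw [prod_mul_swap_of_special hX σ hxy, ih, Equiv.Perm.sign_mul, Equiv.Perm.sign_swap hxy]
    simp
end

section
/- Let X be a special n×n matrix over R. Then det(X) = n! · tr_m(X), where n! is interpreted as the image of the natural number n! in R. In particular this holds for every X ∈ D̃(n,n). -/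
theorem Special.prod_swap_mul {R : Type*} [CommRing R] {n : ℕ}
    {X : Matrix (Fin n) (Fin n) R} (hX : Special X) (σ : Equiv.Perm (Fin n))
    {x y : Fin n} (hxy : x ≠ y) :
    ∏ i, X ((Equiv.swap x y * σ) i) i = -∏ i, X (σ i) i := by
  obtain ⟨a, rfl⟩ := σ.surjective x
  obtain ⟨b, rfl⟩ := σ.surjective y
  have hab : a ≠ b := fun h => hxy (congrArg σ h)
  have hb : b ∈ Finset.univ.erase a := by simp [hab.symm]
  -- Isolate columns `a` and `b`, the only ones where the two products differ.
  rw [← Finset.mul_prod_erase _ _ (Finset.mem_univ a), ← Finset.mul_prod_erase _ _ hb,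
    ← Finset.mul_prod_erase _ (fun i => X (σ i) i) (Finset.mem_univ a),
    ← Finset.mul_prod_erase _ (fun i => X (σ i) i) hb]
  have hrest : ∏ i ∈ (Finset.univ.erase a).erase b, X ((Equiv.swap (σ a) (σ b) * σ) i) i =
      ∏ i ∈ (Finset.univ.erase a).erase b, X (σ i) i := by
    refine Finset.prod_congr rfl fun i hi => ?_
    simp only [Finset.mem_erase, Finset.mem_univ, and_true] at hi
    rw [Equiv.Perm.mul_apply, Equiv.swap_apply_of_ne_of_ne (σ.injective.ne hi.2)
      (σ.injective.ne hi.1)]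
  rw [hrest]
  simp only [Equiv.Perm.mul_apply, Equiv.swap_apply_left, Equiv.swap_apply_right]
  linear_combination
    (∏ i ∈ (Finset.univ.erase a).erase b, X (σ i) i) * hX (σ a) (σ b) a b hxy hab

theorem Special.prod_perm {R : Type*} [CommRing R] {n : ℕ}
    {X : Matrix (Fin n) (Fin n) R} (hX : Special X) (σ : Equiv.Perm (Fin n)) :
    ∏ i, X (σ i) i = ((Equiv.Perm.sign σ : ℤ) : R) * trM X := by
  induction σ using Equiv.Perm.swap_induction_on with
  | one => simp [trM]
  | swap_mul σ x y hxy ih =>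
    rw [hX.prod_swap_mul σ hxy, ih, Equiv.Perm.sign_mul, Equiv.Perm.sign_swap hxy]
    simp

theorem Special.det_eq {R : Type*} [CommRing R] {n : ℕ}
    {X : Matrix (Fin n) (Fin n) R} (hX : Special X) :
    X.det = (n.factorial : R) * trM X := by
  have hterm : ∀ σ : Equiv.Perm (Fin n),
      ((Equiv.Perm.sign σ : ℤ) : R) * ∏ i, X (σ i) i = trM X := fun σ => by
    rw [hX.prod_perm σ, ← mul_assoc, ← Int.cast_mul, Int.units_coe_mul_self, Int.cast_one,
      one_mul]
  rw [Matrix.det_apply', Finset.sum_congr rfl fun σ _ => hterm σ]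
  simp [Fintype.card_perm]

theorem stmt_16 {R : Type*} [CommRing R]
    (h2 : ∀ r : R, r + r = 0 → r = 0)
    {n : ℕ} (X : Matrix (Fin n) (Fin n) R) :
    (Special X → X.det = (n.factorial : R) * trM X) ∧
    (Dtilde X → X.det = (n.factorial : R) * trM X) := by
  exact ⟨Special.det_eq, fun h => Special.det_eq fun i i' j j' _ _ => h i i' j j'⟩
end

section
/- Let X be an m×n matrix in D̃(m,n), and let g : R^m → R be a map of the form g(u) = g₁(u) + g₂(u,u), where g₁ : R^m → R is R-linear and g₂ : R^m × R^m → R is symmetric R-bilinear. Let c₁,…,c_n ∈ R^m denote the columns of X. Then for every a ∈ R^n, g(∑_j a_j · c_j) = ∑_j a_j · g(c_j); that is, g preserves linear combinations of the columns of X. -/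
/-- Coordinate expansion of a bilinear form in the standard basis. -/
lemma bilin_expand {R : Type*} [CommRing R] {m : ℕ}
    (B : (Fin m → R) →ₗ[R] (Fin m → R) →ₗ[R] R) (u v : Fin m → R) :
    B u v = ∑ i, ∑ i', u i * v i' * B (Pi.single i 1) (Pi.single i' 1) := by
  conv_lhs => rw [pi_eq_sum_univ' u, pi_eq_sum_univ' v]
  simp only [map_sum, LinearMap.sum_apply, map_smul, LinearMap.smul_apply, smul_eq_mul,
    Finset.mul_sum]
  rw [Finset.sum_comm]
  refine Finset.sum_congr rfl fun i _ => Finset.sum_congr rfl fun i' _ => ?_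
  ring

lemma bilin_col_eq_zero {R : Type*} [CommRing R]
    (h2 : ∀ r : R, r + r = 0 → r = 0)
    {m n : ℕ} (X : Matrix (Fin m) (Fin n) R) (hX : Dtilde X)
    (B : (Fin m → R) →ₗ[R] (Fin m → R) →ₗ[R] R)
    (hB : ∀ u v, B u v = B v u) (j j' : Fin n) :
    B (fun i => X i j) (fun i => X i j') = 0 := by
  apply h2
  rw [bilin_expand B]
  -- exchange `i` and `i'` in the second copy of the sum
  conv_lhs => arg 2; rw [Finset.sum_comm]
  simp only [← Finset.sum_add_distrib]
  refine Finset.sum_eq_zero fun i _ => Finset.sum_eq_zero fun i' _ => ?_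
  rw [hB (Pi.single i' 1), ← add_mul, hX i i' j j', zero_mul]

theorem stmt_17 {R : Type*} [CommRing R]
    (h2 : ∀ r : R, r + r = 0 → r = 0)
    {m n : ℕ} (X : Matrix (Fin m) (Fin n) R) (hX : Dtilde X)
    (g : (Fin m → R) → R)
    (g1 : (Fin m → R) →ₗ[R] R)
    (g2 : (Fin m → R) →ₗ[R] (Fin m → R) →ₗ[R] R)
    (hg2symm : ∀ u v, g2 u v = g2 v u)
    (hg : ∀ u, g u = g1 u + g2 u u)
    (a : Fin n → R) :
    g (∑ j, a j • (fun i => X i j)) = ∑ j, a j * g (fun i => X i j) := by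
  have h0 := bilin_col_eq_zero h2 X hX g2 hg2symm
  simp only [hg, map_sum, LinearMap.sum_apply, map_smul, LinearMap.smul_apply, smul_eq_mul, h0,
    mul_zero, Finset.sum_const_zero, add_zero]
end
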